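/- Let m be a positive integer, r ≥ 1 and p_k, q_k, s_k ∈ [1,∞) for k = 1,…,m, with q_k ≥ p_k for each k and 1/r − ∑_{k=1}^m 1/p_k + ∑_{k=1}^m 1/q_k > 0, where 1/s_k = 1/r − ∑_{i=k}^m 1/p_i + ∑_{i=k}^m 1/q_i for each k. Then every multiple (r; p₁,…,p_m)-summing m-linear operator T : X₁ × ⋯ × X_m → Y between Banach spaces is multiple ((s₁,…,s_m); q₁,…,q_m)-summing, and the inclusion has norm 1 (the same constant C works). -/

import Mathlib

open scoped BigOperators

/-- The weak ℓ^p norm of a finite family in a normed space: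
`sup_{φ ∈ B_{X'}} (∑ j |φ(x_j)|^p)^(1/p)`. -/
noncomputable def weakNorm {X : Type*} [NormedAddCommGroup X] [NormedSpace ℝ X]
    {n : ℕ} (x : Fin n → X) (p : ℝ) : ℝ :=
  ⨆ φ : {φ : X →L[ℝ] ℝ // ‖φ‖ ≤ 1}, (∑ j, |φ.1 (x j)| ^ p) ^ (1 / p)

/-- The anisotropic mixed-norm of a multi-indexed family of reals with
exponents `s = (s 0, …, s (m-1))`:
`(∑_{j₁} ( ⋯ (∑_{j_m} a^{s_m})^{s_{m-1}/s_m} ⋯ )^{s₁/s₂})^{1/s₁}`. -/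
noncomputable def anorm : (m : ℕ) → (n : Fin m → ℕ) → (s : Fin m → ℝ) →
    ((∀ k, Fin (n k)) → ℝ) → ℝ
  | 0, _, _, a => a finZeroElim
  | m + 1, n, s, a =>
      (∑ j : Fin (n 0), (anorm m (fun k => n k.succ) (fun k => s k.succ)
          fun js => a (Fin.cons j js)) ^ s 0) ^ (1 / s 0)

/-!
The mixed norm of a nonnegative array `a` is tested against product weights: with
`τ k = 1 / p k - 1 / q k`, there are subprobability weights `b k` on the `k`-th index set such that
`anorm m n s a` is at most the `ℓ^r` norm of `j ↦ (∏ k, b k (j k) ^ τ k) * a j`. By induction on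
`m`, each slice of `a` along the first index has such weights, the first index gets the weights of
the equality case of Hölder's inequality, and the weights of the slices, which depend on the first
index, are replaced by their averages.

For the array `‖T (x j)‖` the weights can be moved inside `T` by multilinearity, so the
`(r; p)`-summing inequality applies to the families `b k j ^ τ k • x k j`, whose weak `ℓ^p` norms
are at most the weak `ℓ^q` norms of the `x k`, by Hölder's inequality again.
-/

/-- A family of nonnegative weights of total mass at most `1`. Mass below `1` is allowed so that
zero weights exist on every index set, in particular on the empty one. -/
structure IsSubprobability {ι : Type*} [Fintype ι] (b : ι → ℝ) : Prop where
  nonneg : ∀ j, 0 ≤ b j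
  sum_le_one : ∑ j, b j ≤ 1

section WeightedSums

variable {ι : Type*} [Fintype ι] {p q : ℝ}

theorem IsSubprobability.zero : IsSubprobability (0 : ι → ℝ) :=
  ⟨fun _ => le_rfl, by simp⟩

theorem IsSubprobability.mix {κ : Type*} [Fintype κ] {l : ι → ℝ} {b : ι → κ → ℝ}
    (hl : IsSubprobability l) (hb : ∀ j, IsSubprobability (b j)) :
    IsSubprobability fun i => ∑ j, l j * b j i where
  nonneg i := Finset.sum_nonneg fun j _ => mul_nonneg (hl.nonneg j) ((hb j).nonneg i)
  sum_le_one := by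
    rw [Finset.sum_comm]
    refine le_trans (Finset.sum_le_sum fun j _ => ?_) hl.sum_le_one
    rw [← Finset.mul_sum]
    exact mul_le_of_le_one_right (hl.nonneg j) (hb j).sum_le_one

theorem IsSubprobability.lp_rpow_mul_le_lp {b u : ι → ℝ} (hb : IsSubprobability b)
    (hu : ∀ j, 0 ≤ u j) (hp : 0 < p) (hpq : p ≤ q) :
    (∑ j, (b j ^ (1 / p - 1 / q) * u j) ^ p) ^ (1 / p) ≤ (∑ j, u j ^ q) ^ (1 / q) := by
  obtain rfl | hlt := hpq.eq_or_lt
  · simp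
  have hq : 0 < q := hp.trans hlt
  set t := 1 / p - 1 / q with ht
  have ht_pos : 0 < t := sub_pos.2 (one_div_lt_one_div_of_lt hp hlt)
  have holder_triple : Real.HolderTriple t⁻¹ q p :=
    ⟨by rw [ht, inv_inv]; ring, inv_pos.2 ht_pos, hq⟩
  have hbt_nonneg (j) : 0 ≤ b j ^ t := Real.rpow_nonneg (hb.nonneg j) _
  have hsum_nonneg : 0 ≤ ∑ j, u j ^ q :=
    Finset.sum_nonneg fun j _ => Real.rpow_nonneg (hu j) _
  have mass_le_one : (∑ j, (b j ^ t) ^ t⁻¹) ^ (p / t⁻¹) ≤ 1 := by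
    simp only [Real.rpow_rpow_inv (hb.nonneg _) ht_pos.ne']
    exact Real.rpow_le_one (Finset.sum_nonneg fun j _ => hb.nonneg j) hb.sum_le_one (by positivity)
  have holder : ∑ j, (b j ^ t * u j) ^ p ≤ (∑ j, u j ^ q) ^ (p / q) :=
    (Real.Lr_rpow_le_Lp_mul_Lq_of_nonneg Finset.univ holder_triple
      (fun j _ => hbt_nonneg j) fun j _ => hu j).trans
      (mul_le_of_le_one_left (Real.rpow_nonneg hsum_nonneg _) mass_le_one)
  calc (∑ j, (b j ^ t * u j) ^ p) ^ (1 / p)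
      ≤ ((∑ j, u j ^ q) ^ (p / q)) ^ (1 / p) :=
        Real.rpow_le_rpow (Finset.sum_nonneg fun j _ =>
          Real.rpow_nonneg (mul_nonneg (hbt_nonneg j) (hu j)) _) holder (by positivity)
    _ = (∑ j, u j ^ q) ^ (1 / q) := by
        rw [← Real.rpow_mul hsum_nonneg]
        congr 1
        field_simp

-- The equality case of Hölder's inequality: the optimal weights are proportional to `u ^ q`.
theorem exists_isSubprobability_lp_rpow_mul_eq_lp {u : ι → ℝ} (hu : ∀ j, 0 ≤ u j)
    (hp : 0 < p) (hq : 0 < q) :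
    ∃ b : ι → ℝ, IsSubprobability b ∧
      (∑ j, (b j ^ (1 / p - 1 / q) * u j) ^ p) ^ (1 / p) = (∑ j, u j ^ q) ^ (1 / q) := by
  have huq_nonneg (j) : 0 ≤ u j ^ q := Real.rpow_nonneg (hu j) _
  have hS_nonneg : 0 ≤ ∑ j, u j ^ q := Finset.sum_nonneg fun j _ => huq_nonneg j
  obtain hS | hS := hS_nonneg.eq_or_lt
  · have hu_zero (j) : u j = 0 := by
      rw [← Real.rpow_eq_zero (hu j) hq.ne']
      exact (Finset.sum_eq_zero_iff_of_nonneg fun j _ => huq_nonneg j).1 hS.symm j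
        (Finset.mem_univ j)
    exact ⟨0, .zero, by simp [hu_zero, hp.ne', hq.ne']⟩
  set S := ∑ j, u j ^ q
  refine ⟨fun j => u j ^ q / S, ⟨fun j => div_nonneg (huq_nonneg j) hS_nonneg, ?_⟩, ?_⟩
  · rw [← Finset.sum_div, div_self hS.ne']
  have weighted_term (j) :
      ((u j ^ q / S) ^ (1 / p - 1 / q) * u j) ^ p = u j ^ q / S ^ (1 - p / q) := by
    have exponent_u : q * (1 / p - 1 / q) + 1 = q / p := by field_simp; ring
    have exponent_S : (1 / p - 1 / q) * p = 1 - p / q := by field_simp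
    rw [Real.div_rpow (huq_nonneg j) hS_nonneg, ← Real.rpow_mul (hu j), div_mul_eq_mul_div,
      ← Real.rpow_add_one' (hu j) (by rw [exponent_u]; positivity), exponent_u,
      Real.div_rpow (Real.rpow_nonneg (hu j) _) (Real.rpow_nonneg hS_nonneg _),
      ← Real.rpow_mul (hu j), ← Real.rpow_mul hS_nonneg, exponent_S, div_mul_cancel₀ q hp.ne']
  calc (∑ j, ((u j ^ q / S) ^ (1 / p - 1 / q) * u j) ^ p) ^ (1 / p)
      = (S / S ^ (1 - p / q)) ^ (1 / p) := by
        simp only [weighted_term, ← Finset.sum_div, S]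
    _ = S ^ (1 / q) := by
        nth_rewrite 1 [← Real.rpow_one S]
        rw [← Real.rpow_sub hS, ← Real.rpow_mul hS_nonneg]
        congr 1
        field_simp
        ring

theorem mul_lp_rpow_eq {f : ι → ℝ} {c : ℝ} (hc : 0 ≤ c) (hf : ∀ j, 0 ≤ f j) (hp : p ≠ 0) :
    (c * (∑ j, f j ^ p) ^ (1 / p)) ^ p = ∑ j, (c * f j) ^ p := by
  have hsum_nonneg : 0 ≤ ∑ j, f j ^ p :=
    Finset.sum_nonneg fun j _ => Real.rpow_nonneg (hf j) _
  rw [Real.mul_rpow hc (Real.rpow_nonneg hsum_nonneg _), one_div,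
    Real.rpow_inv_rpow hsum_nonneg hp, Finset.mul_sum]
  exact Finset.sum_congr rfl fun j _ => (Real.mul_rpow hc (hf j)).symm

theorem rpow_sum_mul_prod_rpow_le {u v τ : ι → ℝ} {c : ℝ} (hc : 0 ≤ c) (hu : ∀ k, 0 ≤ u k)
    (hτ : ∀ k, 0 ≤ τ k) (huv : ∀ k, c * u k ≤ v k) :
    c ^ (∑ k, τ k) * ∏ k, u k ^ τ k ≤ ∏ k, v k ^ τ k := by
  rw [Real.rpow_sum_of_nonneg hc fun k _ => hτ k, ← Finset.prod_mul_distrib]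
  simp only [← Real.mul_rpow hc (hu _)]
  exact Finset.prod_le_prod (fun k _ => Real.rpow_nonneg (mul_nonneg hc (hu k)) _)
    fun k _ => Real.rpow_le_rpow (mul_nonneg hc (hu k)) (huv k) (hτ k)

end WeightedSums

section Marginals

variable {m : ℕ} {n : Fin (m + 1) → ℕ} {l : Fin (n 0) → ℝ}
  {b : Fin (n 0) → ∀ k : Fin m, Fin (n k.succ) → ℝ}

/-- The marginals of the mass distribution `(j, i) ↦ l j * ∏ k, b j k (i k)`, in which the law
`∏ k, b j k` of the last `m` indices depends on the first index `j`. They are the true marginals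
when every `b j k` has mass `1`. -/
def marginals (l : Fin (n 0) → ℝ) (b : Fin (n 0) → ∀ k : Fin m, Fin (n k.succ) → ℝ) :
    ∀ k, Fin (n k) → ℝ :=
  Fin.cons (α := fun k => Fin (n k) → ℝ) l fun k i => ∑ j, l j * b j k i

theorem IsSubprobability.marginals (hl : IsSubprobability l)
    (hb : ∀ j k, IsSubprobability (b j k)) (k : Fin (m + 1)) :
    IsSubprobability (marginals l b k) := by
  cases k using Fin.cases with
  | zero => exact hl
  | succ k => exact hl.mix fun j => hb j k

theorem rpow_sum_mul_prod_rpow_le_prod_marginals {τ : Fin (m + 1) → ℝ} (hτ : ∀ k, 0 ≤ τ k)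
    (hl : ∀ j, 0 ≤ l j) (hb : ∀ j k i, 0 ≤ b j k i) (j : Fin (n 0))
    (i : ∀ k : Fin m, Fin (n k.succ)) :
    l j ^ (∑ k, τ k) * ∏ k, b j k (i k) ^ τ k.succ ≤
      ∏ k, marginals l b k (Fin.cons (α := fun k => Fin (n k)) j i k) ^ τ k := by
  have le_marginal (k) : l j * b j k (i k) ≤ ∑ j', l j' * b j' k (i k) :=
    Finset.single_le_sum (f := fun j' => l j' * b j' k (i k))
      (fun j' _ => mul_nonneg (hl j') (hb j' k (i k))) (Finset.mem_univ j)
  rw [Fin.sum_univ_succ, Real.rpow_add_of_nonneg (hl j) (hτ 0)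
    (Finset.sum_nonneg fun k _ => hτ k.succ), mul_assoc, Fin.prod_univ_succ]
  exact mul_le_mul_of_nonneg_left
    (rpow_sum_mul_prod_rpow_le (hl j) (fun k => hb j k (i k)) (fun k => hτ k.succ) le_marginal)
    (Real.rpow_nonneg (hl j) _)

theorem rpow_sum_mul_lp_rpow_le_sum_marginals {r : ℝ} {τ : Fin (m + 1) → ℝ}
    {f : (∀ k : Fin m, Fin (n k.succ)) → ℝ} (hr : 0 < r) (hτ : ∀ k, 0 ≤ τ k)
    (hl : ∀ j, 0 ≤ l j) (hb : ∀ j k i, 0 ≤ b j k i) (hf : ∀ i, 0 ≤ f i) (j : Fin (n 0)) :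
    (l j ^ (∑ k, τ k) * (∑ i, ((∏ k, b j k (i k) ^ τ k.succ) * f i) ^ r) ^ (1 / r)) ^ r ≤
      ∑ i, ((∏ k, marginals l b k (Fin.cons (α := fun k => Fin (n k)) j i k) ^ τ k) *
        f i) ^ r := by
  have hlτ_nonneg : 0 ≤ l j ^ (∑ k, τ k) := Real.rpow_nonneg (hl j) _
  have weighted_nonneg (i : ∀ k : Fin m, Fin (n k.succ)) :
      0 ≤ (∏ k, b j k (i k) ^ τ k.succ) * f i :=
    mul_nonneg (Finset.prod_nonneg fun k _ => Real.rpow_nonneg (hb j k _) _) (hf i)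
  rw [mul_lp_rpow_eq hlτ_nonneg weighted_nonneg hr.ne']
  refine Finset.sum_le_sum fun i _ =>
    Real.rpow_le_rpow (mul_nonneg hlτ_nonneg (weighted_nonneg i)) ?_ hr.le
  rw [← mul_assoc]
  exact mul_le_mul_of_nonneg_right
    (rpow_sum_mul_prod_rpow_le_prod_marginals hτ hl hb j i) (hf i)

end Marginals

theorem anorm_nonneg {m : ℕ} {n : Fin m → ℕ} {s : Fin m → ℝ} {a : (∀ k, Fin (n k)) → ℝ}
    (ha : ∀ j, 0 ≤ a j) : 0 ≤ anorm m n s a := by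
  induction m with
  | zero => exact ha _
  | succ m ih =>
    exact Real.rpow_nonneg (Finset.sum_nonneg fun j _ =>
      Real.rpow_nonneg (ih fun i => ha (Fin.cons j i)) _) _

theorem sum_pi_fin_succ {m : ℕ} {n : Fin (m + 1) → ℕ} {M : Type*} [AddCommMonoid M]
    (f : (∀ k, Fin (n k)) → M) :
    ∑ j, f j = ∑ j : Fin (n 0), ∑ i : ∀ k : Fin m, Fin (n k.succ), f (Fin.cons j i) := by
  rw [← (Fin.consEquiv fun k => Fin (n k)).sum_comp, Fintype.sum_prod_type]
  rfl

theorem exists_weights_anorm_le {m : ℕ} {n : Fin m → ℕ} {r : ℝ} {s τ : Fin m → ℝ}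
    {a : (∀ k, Fin (n k)) → ℝ} (hr : 0 < r) (hτ : ∀ k, 0 ≤ τ k) (hs_pos : ∀ k, 0 < s k)
    (hs : ∀ k, 1 / s k = 1 / r - ∑ i ∈ Finset.Ici k, τ i) (ha : ∀ j, 0 ≤ a j) :
    ∃ b : ∀ k, Fin (n k) → ℝ, (∀ k, IsSubprobability (b k)) ∧
      anorm m n s a ≤ (∑ j, ((∏ k, b k (j k) ^ τ k) * a j) ^ r) ^ (1 / r) := by
  induction m with
  | zero =>
    refine ⟨finZeroElim, finZeroElim, le_of_eq ?_⟩
    rw [Fintype.sum_unique, Fin.prod_univ_zero, one_mul, one_div,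
      Real.rpow_rpow_inv (ha _) hr.ne']
    exact congrArg a (Subsingleton.elim _ _)
  | succ m ih =>
    have hs_tail (k : Fin m) :
        1 / s k.succ = 1 / r - ∑ i ∈ Finset.Ici k, τ i.succ := by
      rw [hs, ← Fin.map_succEmb_Ici, Finset.sum_map]
      rfl
    choose b hb anorm_tail_le using fun j : Fin (n 0) =>
      ih (fun k => hτ k.succ) (fun k => hs_pos k.succ) hs_tail fun i => ha (Fin.cons j i)
    have anorm_tail_nonneg (j : Fin (n 0)) :
        0 ≤ anorm m (fun k => n k.succ) (fun k => s k.succ) fun i => a (Fin.cons j i) :=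
      anorm_nonneg fun i => ha _
    obtain ⟨l, hl, lp_eq⟩ :=
      exists_isSubprobability_lp_rpow_mul_eq_lp anorm_tail_nonneg hr (hs_pos 0)
    have exponent : 1 / r - 1 / s 0 = ∑ k, τ k := by
      rw [hs 0, sub_sub_cancel]
      exact Finset.sum_congr Finset.Ici_bot fun _ _ => rfl
    rw [exponent] at lp_eq
    have hlτ_nonneg (j) : 0 ≤ l j ^ (∑ k, τ k) := Real.rpow_nonneg (hl.nonneg j) _
    refine ⟨marginals l b, .marginals hl hb, ?_⟩
    rw [anorm, ← lp_eq, sum_pi_fin_succ]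
    have weighted_nonneg (j : Fin (n 0)) := mul_nonneg (hlτ_nonneg j) (anorm_tail_nonneg j)
    refine Real.rpow_le_rpow (Finset.sum_nonneg fun j _ => Real.rpow_nonneg (weighted_nonneg j) _)
      (Finset.sum_le_sum fun j _ => ?_) (one_div_pos.2 hr).le
    exact (Real.rpow_le_rpow (weighted_nonneg j)
      (mul_le_mul_of_nonneg_left (anorm_tail_le j) (hlτ_nonneg j)) hr.le).trans
      (rpow_sum_mul_lp_rpow_le_sum_marginals hr hτ hl.nonneg (fun j k => (hb j k).nonneg)
        (fun i => ha _) j)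

section WeakNorm

variable {X : Type*} [NormedAddCommGroup X] [NormedSpace ℝ X] {n : ℕ} (x : Fin n → X) {p q : ℝ}

theorem weakNorm_nonneg : 0 ≤ weakNorm x p :=
  Real.iSup_nonneg fun _ => Real.rpow_nonneg
    (Finset.sum_nonneg fun _ _ => Real.rpow_nonneg (abs_nonneg _) _) _

theorem bddAbove_range_weakNorm (hp : 0 < p) :
    BddAbove (Set.range fun φ : {φ : X →L[ℝ] ℝ // ‖φ‖ ≤ 1} =>
      (∑ j, |φ.1 (x j)| ^ p) ^ (1 / p)) := by
  refine ⟨(∑ j, ‖x j‖ ^ p) ^ (1 / p), ?_⟩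
  rintro _ ⟨φ, rfl⟩
  have abs_apply_le (j) : |φ.1 (x j)| ≤ ‖x j‖ := by
    simpa using φ.1.le_of_opNorm_le φ.2 (x j)
  dsimp only
  gcongr with j
  exact abs_apply_le j

theorem IsSubprobability.weakNorm_rpow_smul_le {b : Fin n → ℝ} (hb : IsSubprobability b)
    (hp : 0 < p) (hpq : p ≤ q) :
    weakNorm (fun j => b j ^ (1 / p - 1 / q) • x j) p ≤ weakNorm x q := by
  have : Nonempty {φ : X →L[ℝ] ℝ // ‖φ‖ ≤ 1} := ⟨⟨0, by simp⟩⟩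
  refine ciSup_le fun φ => le_trans ?_ (le_ciSup (bddAbove_range_weakNorm x (hp.trans_le hpq)) φ)
  simpa only [map_smul, smul_eq_mul, abs_mul, abs_of_nonneg (Real.rpow_nonneg (hb.nonneg _) _)]
    using hb.lp_rpow_mul_le_lp (fun j => abs_nonneg (φ.1 (x j))) hp hpq

end WeakNorm

theorem anisotropic_inclusion_theorem_general {m : ℕ}
    {X : Fin m → Type*} [∀ k, NormedAddCommGroup (X k)] [∀ k, NormedSpace ℝ (X k)]
    {Y : Type*} [SeminormedAddCommGroup Y] [NormedSpace ℝ Y]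
    (T : MultilinearMap ℝ X Y)
    {r : ℝ} {p q s : Fin m → ℝ} (hr : 0 < r)
    (hp : ∀ k, 0 < p k) (hpq : ∀ k, p k ≤ q k)
    (hpos : 0 < 1 / r - ∑ k, 1 / p k + ∑ k, 1 / q k)
    (hs : ∀ k, 1 / s k =
      1 / r - (∑ i, if k ≤ i then 1 / p i else 0) + ∑ i, if k ≤ i then 1 / q i else 0)
    {C : ℝ} (hC : 0 ≤ C) {n : Fin m → ℕ}
    (hT : ∀ x : ∀ k, Fin (n k) → X k,
      (∑ j : ∀ k, Fin (n k), ‖T (fun k => x k (j k))‖ ^ r) ^ (1 / r) ≤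
        C * ∏ k, weakNorm (x k) (p k))
    (x : ∀ k, Fin (n k) → X k) :
    anorm m n s (fun j => ‖T (fun k => x k (j k))‖) ≤ C * ∏ k, weakNorm (x k) (q k) := by
  let τ (k : Fin m) : ℝ := 1 / p k - 1 / q k
  have hτ (k) : 0 ≤ τ k := sub_nonneg.2 (one_div_le_one_div_of_le (hp k) (hpq k))
  have hsτ (k) : 1 / s k = 1 / r - ∑ i ∈ Finset.Ici k, τ i := by
    rw [hs k, sub_add, ← Finset.sum_filter, ← Finset.sum_filter, Finset.filter_le_eq_Ici,
      Finset.sum_sub_distrib]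
  have hs_pos (k) : 0 < s k := by
    have tail_le : ∑ i ∈ Finset.Ici k, τ i ≤ ∑ i, τ i :=
      Finset.sum_le_univ_sum_of_nonneg hτ
    rw [Finset.sum_sub_distrib (s := Finset.univ)] at tail_le
    exact one_div_pos.1 (by linarith [hsτ k])
  obtain ⟨b, hb, anorm_le⟩ := exists_weights_anorm_le hr hτ hs_pos hsτ
    fun j => norm_nonneg (T fun k => x k (j k))
  have norm_weighted (j : ∀ k, Fin (n k)) : ‖T fun k => b k (j k) ^ τ k • x k (j k)‖ =
      (∏ k, b k (j k) ^ τ k) * ‖T fun k => x k (j k)‖ := by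
    rw [T.map_smul_univ, norm_smul, Real.norm_of_nonneg
      (Finset.prod_nonneg fun k _ => Real.rpow_nonneg ((hb k).nonneg _) _)]
  calc anorm m n s (fun j => ‖T (fun k => x k (j k))‖)
      ≤ (∑ j : ∀ k, Fin (n k), ‖T fun k => b k (j k) ^ τ k • x k (j k)‖ ^ r) ^ (1 / r) := by
        simpa only [norm_weighted] using anorm_le
    _ ≤ C * ∏ k, weakNorm (fun j => b k j ^ τ k • x k j) (p k) :=
        hT fun k j => b k j ^ τ k • x k j
    _ ≤ C * ∏ k, weakNorm (x k) (q k) :=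
        mul_le_mul_of_nonneg_left (Finset.prod_le_prod (fun k _ => weakNorm_nonneg _)
          fun k _ => (hb k).weakNorm_rpow_smul_le (x k) (hp k) (hpq k)) hC

/-- **The new anisotropic inclusion theorem (Theorem 1.3 of the paper).**
If `T` is multiple `(r; p₁,…,p_m)`-summing with constant `C`, `q_k ≥ p_k`,
`1/r − ∑ 1/p_k + ∑ 1/q_k > 0` and `1/s_k = 1/r − ∑_{i≥k} 1/p_i + ∑_{i≥k} 1/q_i`,
then `T` is multiple `((s₁,…,s_m); q₁,…,q_m)`-summing with the same constant `C`
(so the inclusion operator has norm 1). -/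
theorem anisotropic_inclusion_theorem
    (m : ℕ) (hm : 0 < m)
    {X : Fin m → Type*} [∀ k, NormedAddCommGroup (X k)] [∀ k, NormedSpace ℝ (X k)]
    [∀ k, CompleteSpace (X k)]
    {Y : Type*} [NormedAddCommGroup Y] [NormedSpace ℝ Y] [CompleteSpace Y]
    (T : ContinuousMultilinearMap ℝ X Y)
    (r : ℝ) (p q s : Fin m → ℝ) (hr : 1 ≤ r)
    (hp : ∀ k, 1 ≤ p k) (hpq : ∀ k, p k ≤ q k)
    (hpos : 0 < 1 / r - ∑ k, 1 / p k + ∑ k, 1 / q k)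
    (hs : ∀ k, 1 / s k =
      1 / r - (∑ i, if k ≤ i then 1 / p i else 0) + ∑ i, if k ≤ i then 1 / q i else 0)
    (C : ℝ) (hC : 0 ≤ C)
    (hT : ∀ (n : Fin m → ℕ) (x : ∀ k, Fin (n k) → X k),
      (∑ j : ∀ k, Fin (n k), ‖T (fun k => x k (j k))‖ ^ r) ^ (1 / r) ≤
        C * ∏ k, weakNorm (x k) (p k)) :
    ∀ (n : Fin m → ℕ) (x : ∀ k, Fin (n k) → X k),
      anorm m n s (fun j => ‖T (fun k => x k (j k))‖) ≤
        C * ∏ k, weakNorm (x k) (q k) := fun n =>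
  anisotropic_inclusion_theorem_general T.toMultilinearMap (zero_lt_one.trans_le hr)
    (fun k => zero_lt_one.trans_le (hp k)) hpq hpos hs hC (hT n)
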